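/- Define G₀ := k₊²·exp(2μ₊/k₊) + k₋²·exp(−2μ₋/k₋) on ℝ³. Then the function W := W̃·G₀ satisfies W₁₁ + (1/2)·((1+p)·W)₊₊ + (1/2)·((1−p)·W)₋₋ = 0 at every point of ℝ³. (This is the anomalous global solution G₀ appearing in Proposition 6.4(2) of the paper.) -/

import Mathlib

/-- Partial derivative in the `i`-th coordinate direction of a function on `ℝ³`
(coordinates `μ₁ = x 0`, `μ₊ = x 1`, `μ₋ = x 2`). -/
noncomputable def pd3 (i : Fin 3) (F : (Fin 3 → ℝ) → ℝ) (x : Fin 3 → ℝ) : ℝ :=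
  deriv (fun t => F (Function.update x i t)) (x i)

/-! With `e = exp Φ` one has `1 - p = e (1 + p)`, so `(1 + p) W̃ = 1 / (a₊² + a₋² e)`. The function
`G₀` is `4 exp(-a₋ μ₋) / (a₊² a₋²)` times exactly this denominator. Hence `(1 + p) W` depends on
`μ₋` alone and `(1 - p) W` on `μ₊` alone, so each of the three terms of the equation vanishes. -/

section PartialDerivatives

variable {i : Fin 3} {F : (Fin 3 → ℝ) → ℝ}

theorem pd3_eq_zero_of_dependsOn_compl (hF : DependsOn F {i}ᶜ) : pd3 i F = 0 := by
  funext x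
  have hconst (t : ℝ) : F (Function.update x i t) = F x :=
    hF fun j hj => Function.update_of_ne hj t x
  simp [pd3, hconst]

theorem pd3_pd3_eq_zero_of_dependsOn_compl (hF : DependsOn F {i}ᶜ) : pd3 i (pd3 i F) = 0 := by
  rw [pd3_eq_zero_of_dependsOn_compl hF]
  exact pd3_eq_zero_of_dependsOn_compl ((dependsOn_const 0).mono (Set.empty_subset _))

theorem weighted_pd3_sum_eq_zero_of_dependsOn {p W : (Fin 3 → ℝ) → ℝ}
    (hadd : DependsOn (fun y => (1 + p y) * W y) {2})
    (hsub : DependsOn (fun y => (1 - p y) * W y) {1}) (x : Fin 3 → ℝ) :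
    pd3 0 (pd3 0 W) x
      + (1 / 2) * pd3 1 (pd3 1 (fun y => (1 + p y) * W y)) x
      + (1 / 2) * pd3 2 (pd3 2 (fun y => (1 - p y) * W y)) x = 0 := by
  have hW : DependsOn W {0}ᶜ := fun y z hyz => by
    have hadd_eq : (1 + p y) * W y = (1 + p z) * W z := hadd (by simp [hyz])
    have hsub_eq : (1 - p y) * W y = (1 - p z) * W z := hsub (by simp [hyz])
    linarith
  have hadd' := hadd.mono (t := {1}ᶜ) (by simp)
  have hsub' := hsub.mono (t := {2}ᶜ) (by simp)
  simp [pd3_pd3_eq_zero_of_dependsOn_compl, hW, hadd', hsub']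

end PartialDerivatives

section Algebra

variable {K : Type*} [Field K] {A B c e p u v : K}

theorem one_add_one_sub_div_one_add_ne_zero [NeZero (2 : K)] (he : 1 + e ≠ 0) :
    1 + (1 - e) / (1 + e) ≠ 0 := by
  have heq : 1 + (1 - e) / (1 + e) = 2 / (1 + e) := by
    field_simp
    ring
  rw [heq]
  exact div_ne_zero two_ne_zero he

theorem one_sub_one_sub_div_one_add (he : 1 + e ≠ 0) :
    1 - (1 - e) / (1 + e) = e * (1 + (1 - e) / (1 + e)) := by
  field_simp
  ring

theorem one_add_mul_inv_weighted_sum (hp : 1 + p ≠ 0) (hpe : 1 - p = e * (1 + p)) :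
    (1 + p) * (A * (1 + p) + B * (1 - p))⁻¹ = (A + B * e)⁻¹ := by
  have hfactor : A * (1 + p) + B * (1 - p) = (1 + p) * (A + B * e) := by
    rw [hpe]
    ring
  rw [hfactor, mul_inv, mul_inv_cancel_left₀ hp]

theorem one_add_mul_inv_weighted_sum_mul (hp : 1 + p ≠ 0) (hpuv : 1 - p = u * v * (1 + p))
    (hA : A ≠ 0) (hB : B ≠ 0) (hv : v ≠ 0) (hABuv : A + B * (u * v) ≠ 0) :
    (1 + p) * ((A * (1 + p) + B * (1 - p))⁻¹ * (c / A * u + c / B * v⁻¹)) = c / (A * B) * v⁻¹ := by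
  have hfactor : c / A * u + c / B * v⁻¹ = (A + B * (u * v)) * (c / (A * B) * v⁻¹) := by
    field_simp
    ring
  rw [← mul_assoc, one_add_mul_inv_weighted_sum hp hpuv, hfactor, inv_mul_cancel_left₀ hABuv]

theorem one_sub_mul_inv_weighted_sum_mul (hp : 1 + p ≠ 0) (hpuv : 1 - p = u * v * (1 + p))
    (hA : A ≠ 0) (hB : B ≠ 0) (hv : v ≠ 0) (hABuv : A + B * (u * v) ≠ 0) :
    (1 - p) * ((A * (1 + p) + B * (1 - p))⁻¹ * (c / A * u + c / B * v⁻¹)) = c / (A * B) * u := by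
  calc (1 - p) * ((A * (1 + p) + B * (1 - p))⁻¹ * (c / A * u + c / B * v⁻¹))
      = u * v * ((1 + p) * ((A * (1 + p) + B * (1 - p))⁻¹ * (c / A * u + c / B * v⁻¹))) := by
        rw [← mul_assoc (u * v), ← hpuv]
    _ = u * v * (c / (A * B) * v⁻¹) := by
        rw [one_add_mul_inv_weighted_sum_mul hp hpuv hA hB hv hABuv]
    _ = c / (A * B) * u := by field_simp

end Algebra

/-- (Proposition 6.4(2).) With `a₊ = 2/k₊`, `a₋ = 2/k₋` and
`G₀ := k₊² exp(2μ₊/k₊) + k₋² exp(-2μ₋/k₋)`, the anomalous solution `W := W̃·G₀`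
satisfies `W₁₁ + (1/2)((1+p)W)₊₊ + (1/2)((1-p)W)₋₋ = 0` at every point of `ℝ³`. -/
theorem anomalous_solution (kp km : ℝ) (hkp : kp ≠ 0) (hkm : km ≠ 0)
    (ap am : ℝ) (hap : ap = 2 / kp) (ham : am = 2 / km)
    (Φ p Wt G0 W : (Fin 3 → ℝ) → ℝ)
    (hΦ : ∀ x, Φ x = ap * x 1 + am * x 2)
    (hp : ∀ x, p x = (1 - Real.exp (Φ x)) / (1 + Real.exp (Φ x)))
    (hWt : ∀ x, Wt x = (ap ^ 2 * (1 + p x) + am ^ 2 * (1 - p x))⁻¹)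
    (hG0 : ∀ x, G0 x = kp ^ 2 * Real.exp (2 * x 1 / kp) + km ^ 2 * Real.exp (-(2 * x 2 / km)))
    (hW : ∀ x, W x = Wt x * G0 x) :
    ∀ x : Fin 3 → ℝ,
      pd3 0 (pd3 0 W) x
        + (1 / 2) * pd3 1 (pd3 1 (fun y => (1 + p y) * W y)) x
        + (1 / 2) * pd3 2 (pd3 2 (fun y => (1 - p y) * W y)) x = 0 := by
  have hkp_sq : kp ^ 2 = 4 / ap ^ 2 := by rw [hap]; field_simp; norm_num
  have hkm_sq : km ^ 2 = 4 / am ^ 2 := by rw [ham]; field_simp; norm_num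
  have hap_sq : ap ^ 2 ≠ 0 := by rw [hap]; positivity
  have ham_sq : am ^ 2 ≠ 0 := by rw [ham]; positivity
  have hexpΦ (y) : Real.exp (Φ y) = Real.exp (ap * y 1) * Real.exp (am * y 2) := by
    rw [hΦ, Real.exp_add]
  have hG (y) : G0 y =
      4 / ap ^ 2 * Real.exp (ap * y 1) + 4 / am ^ 2 * (Real.exp (am * y 2))⁻¹ := by
    rw [hG0, ← hkp_sq, ← hkm_sq, ← Real.exp_neg, hap, ham, div_mul_eq_mul_div, div_mul_eq_mul_div]
  have hexp_ne (y) : 1 + Real.exp (Φ y) ≠ 0 := by positivity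
  have hp_ne (y) : 1 + p y ≠ 0 := by
    simpa only [hp] using one_add_one_sub_div_one_add_ne_zero (hexp_ne y)
  have hpΦ (y) : 1 - p y = Real.exp (ap * y 1) * Real.exp (am * y 2) * (1 + p y) := by
    rw [← hexpΦ, hp, one_sub_one_sub_div_one_add (hexp_ne y)]
  have hden (y : Fin 3 → ℝ) :
      ap ^ 2 + am ^ 2 * (Real.exp (ap * y 1) * Real.exp (am * y 2)) ≠ 0 := by positivity
  have hadd (y) : (1 + p y) * W y = 4 / (ap ^ 2 * am ^ 2) * (Real.exp (am * y 2))⁻¹ := by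
    rw [hW, hWt, hG, one_add_mul_inv_weighted_sum_mul (hp_ne y) (hpΦ y) hap_sq ham_sq
      (Real.exp_ne_zero _) (hden y)]
  have hsub (y) : (1 - p y) * W y = 4 / (ap ^ 2 * am ^ 2) * Real.exp (ap * y 1) := by
    rw [hW, hWt, hG, one_sub_mul_inv_weighted_sum_mul (hp_ne y) (hpΦ y) hap_sq ham_sq
      (Real.exp_ne_zero _) (hden y)]
  exact weighted_pd3_sum_eq_zero_of_dependsOn (fun y z hyz => by simp only [hadd, hyz 2 rfl])
    (fun y z hyz => by simp only [hsub, hyz 1 rfl])
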